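/- Let X, Y be real random variables with joint density p_{s,t}(y,z), such that the marginal density p_s of X satisfies p_s(y) ≤ c/√t₀ for all y. Let K_{h,x}(y) = h⁻¹K((y−x)/h) where K is a nonnegative kernel with ∫K = 1, and φ : ℝ² → ℝ measurable with E φ(X,Y)² < ∞. Then ∫ℝ (E[K_{h,x}(X) φ(X,Y)])² dx ≤ (c/√t₀) · E[φ(X,Y)²]. -/

import Mathlib

open MeasureTheory Real Set

/-!
Regard `K_h (X ω - x)` as an integral kernel in `(x, ω)`. Its integral over `x` is `‖K‖₁` by
translation invariance, and its integral over `ω` is at most `C ‖K‖₁`, because the law of `X` has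
density at most `C`. Schur's test, which is Jensen's inequality in `ω` followed by Tonelli, turns
these two bounds into `∫ |E[K_h (X - x) f]|ᵖ dx ≤ (C ‖K‖₁) ^ (p - 1) * ‖K‖₁ * E|f|ᵖ`;
the factor is `C` when `p = 2` and `‖K‖₁ = 1`.
-/

open Measure Module
open scoped ENNReal NNReal

section SchurTest

variable {α β : Type*} [MeasurableSpace α] [MeasurableSpace β] {μ : Measure α} {ν : Measure β}
  {p : ℝ}

theorem rpow_lintegral_mul_le (hp : 1 ≤ p) {g f : α → ℝ≥0∞} (hg : AEMeasurable g μ)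
    (hf : AEMeasurable f μ) :
    (∫⁻ a, g a * f a ∂μ) ^ p ≤ (∫⁻ a, g a ∂μ) ^ (p - 1) * ∫⁻ a, g a * f a ^ p ∂μ := by
  have hp0 : 0 < p := one_pos.trans_le hp
  have hf' : AEMeasurable f (μ.withDensity g) := hf.mono_ac (withDensity_absolutelyContinuous μ g)
  -- Hölder against `1` for the measure `g • μ`, whose total mass is `∫⁻ a, g a ∂μ`.
  have holder := ENNReal.rpow_le_rpow
    (eLpNorm'_le_eLpNorm'_mul_rpow_measure_univ one_pos hp hf'.aestronglyMeasurable) hp0.le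
  have exponent : (1 / 1 - 1 / p) * p = p - 1 := by field_simp
  rw [ENNReal.mul_rpow_of_nonneg _ _ hp0.le, ← ENNReal.rpow_mul, exponent, mul_comm] at holder
  simpa only [eLpNorm', enorm_eq_self, ENNReal.rpow_one, one_div, inv_one,
    ENNReal.rpow_inv_rpow hp0.ne', withDensity_apply _ MeasurableSet.univ, Measure.restrict_univ,
    lintegral_withDensity_eq_lintegral_mul₀ hg hf,
    lintegral_withDensity_eq_lintegral_mul₀ hg (hf.pow_const p), Pi.mul_apply] using holder

theorem lintegral_rpow_lintegral_mul_le_of_schur [SFinite μ] [SFinite ν] (hp : 1 ≤ p)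
    {k : β × α → ℝ≥0∞} (hk : AEMeasurable k (ν.prod μ)) {A B : ℝ≥0∞}
    (hA : ∀ᵐ b ∂ν, ∫⁻ a, k (b, a) ∂μ ≤ A) (hB : ∀ᵐ a ∂μ, ∫⁻ b, k (b, a) ∂ν ≤ B)
    {f : α → ℝ≥0∞} (hf : AEMeasurable f μ) :
    ∫⁻ b, (∫⁻ a, k (b, a) * f a ∂μ) ^ p ∂ν ≤ A ^ (p - 1) * (B * ∫⁻ a, f a ^ p ∂μ) := by
  have hkf : AEMeasurable (fun q => k q * f q.2 ^ p) (ν.prod μ) :=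
    hk.mul (hf.pow_const p).comp_snd
  calc ∫⁻ b, (∫⁻ a, k (b, a) * f a ∂μ) ^ p ∂ν
      ≤ ∫⁻ b, A ^ (p - 1) * ∫⁻ a, k (b, a) * f a ^ p ∂μ ∂ν := by
        refine lintegral_mono_ae ?_
        filter_upwards [hA, hk.aestronglyMeasurable.prodMk_left] with b hAb hkb
        grw [rpow_lintegral_mul_le hp hkb.aemeasurable hf, hAb]
        exact sub_nonneg.2 hp
    _ = A ^ (p - 1) * ∫⁻ b, ∫⁻ a, k (b, a) * f a ^ p ∂μ ∂ν :=
        lintegral_const_mul'' _ hkf.lintegral_prod_right'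
    _ = A ^ (p - 1) * ∫⁻ a, ∫⁻ b, k (b, a) * f a ^ p ∂ν ∂μ := by
        rw [lintegral_lintegral_swap hkf]
    _ ≤ A ^ (p - 1) * ∫⁻ a, B * f a ^ p ∂μ := by
        gcongr 1
        refine lintegral_mono_ae ?_
        filter_upwards [hB, hk.aestronglyMeasurable.prodMk_right] with a hBa hka
        rw [lintegral_mul_const'' _ hka.aemeasurable]
        gcongr
    _ = A ^ (p - 1) * (B * ∫⁻ a, f a ^ p ∂μ) := by
        rw [lintegral_const_mul'' _ (hf.pow_const p)]

end SchurTest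

section NormRpow

variable {α E : Type*} [MeasurableSpace α] {μ : Measure α}
  [SeminormedAddCommGroup E] {p : ℝ}

theorem enorm_norm_rpow (hp : 0 ≤ p) (v : E) : ‖‖v‖ ^ p‖ₑ = ‖v‖ₑ ^ p := by
  rw [Real.enorm_rpow_of_nonneg (norm_nonneg v) hp, enorm_norm]

theorem lintegral_enorm_rpow_eq_ofReal (hp : 0 ≤ p) {f : α → E}
    (hfp : Integrable (fun a => ‖f a‖ ^ p) μ) :
    ∫⁻ a, ‖f a‖ₑ ^ p ∂μ = ENNReal.ofReal (∫ a, ‖f a‖ ^ p ∂μ) := by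
  simp only [← enorm_norm_rpow hp, ← ofReal_integral_norm_eq_lintegral_enorm hfp,
    Real.norm_of_nonneg (Real.rpow_nonneg (norm_nonneg _) p)]

end NormRpow

section BoundedDensity

variable {Ω G : Type*} [MeasurableSpace Ω] [MeasurableSpace G] {μ : Measure Ω} {ν : Measure G}
  {X : Ω → G} {C : ℝ≥0}

theorem withDensity_le_smul_of_ae_le {ρ : G → ℝ≥0∞} (hρ : ∀ᵐ y ∂ν, ρ y ≤ C) :
    ν.withDensity ρ ≤ C • ν :=
  (withDensity_mono hρ).trans_eq (withDensity_const _)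

theorem quasiMeasurePreserving_of_map_le_smul (hX : Measurable X) (hXν : μ.map X ≤ C • ν) :
    QuasiMeasurePreserving X μ ν :=
  ⟨hX, (absolutelyContinuous_of_le hXν).trans smul_absolutelyContinuous⟩

theorem sigmaFinite_of_map_le_smul [SigmaFinite ν] (hX : Measurable X) (hXν : μ.map X ≤ C • ν) :
    SigmaFinite μ :=
  .of_map μ hX.aemeasurable (sigmaFinite_of_le (C • ν) hXν)

variable [AddGroup G]

theorem lintegral_comp_sub_le_of_map_le_smul [MeasurableAdd G] [IsAddRightInvariant ν]
    (hX : Measurable X) (hXν : μ.map X ≤ C • ν) {k : G → ℝ≥0∞}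
    (hk : AEMeasurable k ν) (x : G) :
    ∫⁻ ω, k (X ω - x) ∂μ ≤ C * ∫⁻ u, k u ∂ν := by
  have hkx : AEMeasurable (fun y => k (y - x)) (μ.map X) :=
    (hk.comp_quasiMeasurePreserving
      (measurePreserving_sub_right ν x).quasiMeasurePreserving).mono_ac
      (quasiMeasurePreserving_of_map_le_smul hX hXν).absolutelyContinuous
  calc ∫⁻ ω, k (X ω - x) ∂μ
      = ∫⁻ y, k (y - x) ∂μ.map X := (lintegral_map' hkx hX.aemeasurable).symm
    _ ≤ ∫⁻ y, k (y - x) ∂(C • ν) := lintegral_mono' hXν le_rfl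
    _ = C * ∫⁻ u, k u ∂ν := by
        rw [lintegral_smul_measure, lintegral_sub_right_eq_self, ENNReal.smul_def, smul_eq_mul]

variable [MeasurableAdd₂ G] [MeasurableNeg G] [IsAddRightInvariant ν]

theorem quasiMeasurePreserving_comp_sub [SFinite μ] [SFinite ν]
    (hX : QuasiMeasurePreserving X μ ν) :
    QuasiMeasurePreserving (fun q : G × Ω => X q.2 - q.1) (ν.prod μ) ν :=
  QuasiMeasurePreserving.prod_of_right (by have := hX.measurable; fun_prop) <| ae_of_all _ fun x =>
    (measurePreserving_sub_right ν x).quasiMeasurePreserving.comp hX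

variable [SigmaFinite ν] [IsAddLeftInvariant ν] [IsNegInvariant ν] {p : ℝ}

theorem lintegral_rpow_lintegral_comp_sub_mul_le (hp : 1 ≤ p) (hX : Measurable X)
    (hXν : μ.map X ≤ C • ν) {k : G → ℝ≥0∞} (hk : AEMeasurable k ν)
    {f : Ω → ℝ≥0∞} (hf : AEMeasurable f μ) :
    ∫⁻ x, (∫⁻ ω, k (X ω - x) * f ω ∂μ) ^ p ∂ν
      ≤ C ^ (p - 1) * (∫⁻ u, k u ∂ν) ^ p * ∫⁻ ω, f ω ^ p ∂μ := by
  have := sigmaFinite_of_map_le_smul hX hXν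
  have schur := lintegral_rpow_lintegral_mul_le_of_schur hp
    (k := fun q => k (X q.2 - q.1))
    (hk.comp_quasiMeasurePreserving
      (quasiMeasurePreserving_comp_sub (quasiMeasurePreserving_of_map_le_smul hX hXν)))
    (ae_of_all ν (lintegral_comp_sub_le_of_map_le_smul hX hXν hk))
    (ae_of_all μ fun ω => (lintegral_sub_left_eq_self k (X ω)).le) hf
  refine schur.trans_eq ?_
  have hpow : (∫⁻ u, k u ∂ν) ^ p = (∫⁻ u, k u ∂ν) ^ (p - 1) * ∫⁻ u, k u ∂ν := by
    simpa only [sub_add_cancel, ENNReal.rpow_one] using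
      ENNReal.rpow_add_of_nonneg (x := ∫⁻ u, k u ∂ν) (p - 1) 1 (sub_nonneg.2 hp) zero_le_one
  rw [ENNReal.mul_rpow_of_nonneg _ _ (sub_nonneg.2 hp), hpow]
  ring

theorem integral_norm_rpow_integral_comp_sub_smul_le {E : Type*} [NormedAddCommGroup E]
    [NormedSpace ℝ E] (hp : 1 ≤ p) (hX : Measurable X) (hXν : μ.map X ≤ C • ν)
    {k : G → ℝ} (hk : Integrable k ν) {f : Ω → E} (hf : AEStronglyMeasurable f μ)
    (hfp : Integrable (fun ω => ‖f ω‖ ^ p) μ) :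
    ∫ x, ‖∫ ω, k (X ω - x) • f ω ∂μ‖ ^ p ∂ν
      ≤ C ^ (p - 1) * (∫ u, ‖k u‖ ∂ν) ^ p * ∫ ω, ‖f ω‖ ^ p ∂μ := by
  have hp0 : 0 ≤ p := zero_le_one.trans hp
  rw [← ENNReal.ofReal_le_ofReal_iff (by positivity)]
  calc ENNReal.ofReal (∫ x, ‖∫ ω, k (X ω - x) • f ω ∂μ‖ ^ p ∂ν)
      = ‖∫ x, ‖∫ ω, k (X ω - x) • f ω ∂μ‖ ^ p ∂ν‖ₑ :=
        (Real.enorm_of_nonneg (by positivity)).symm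
    _ ≤ ∫⁻ x, ‖∫ ω, k (X ω - x) • f ω ∂μ‖ₑ ^ p ∂ν := by
        simpa only [enorm_norm_rpow hp0] using enorm_integral_le_lintegral_enorm
          (μ := ν) fun x => ‖∫ ω, k (X ω - x) • f ω ∂μ‖ ^ p
    _ ≤ ∫⁻ x, (∫⁻ ω, ‖k (X ω - x)‖ₑ * ‖f ω‖ₑ ∂μ) ^ p ∂ν := by
        gcongr with x
        simpa only [enorm_smul] using
          enorm_integral_le_lintegral_enorm (μ := μ) fun ω => k (X ω - x) • f ω
    _ ≤ C ^ (p - 1) * (∫⁻ u, ‖k u‖ₑ ∂ν) ^ p * ∫⁻ ω, ‖f ω‖ₑ ^ p ∂μ :=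
        lintegral_rpow_lintegral_comp_sub_mul_le hp hX hXν hk.1.enorm hf.enorm
    _ = ENNReal.ofReal (C ^ (p - 1) * (∫ u, ‖k u‖ ∂ν) ^ p * ∫ ω, ‖f ω‖ ^ p ∂μ) := by
        rw [lintegral_enorm_rpow_eq_ofReal hp0 hfp, ← ofReal_integral_norm_eq_lintegral_enorm hk,
          ENNReal.ofReal_mul (by positivity), ENNReal.ofReal_mul (by positivity),
          ENNReal.ofReal_rpow_of_nonneg (integral_nonneg fun _ => norm_nonneg _) hp0,
          ← ENNReal.ofReal_coe_nnreal, ENNReal.ofReal_rpow_of_nonneg C.coe_nonneg (sub_nonneg.2 hp)]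

end BoundedDensity

section RescaledKernel

/-- The kernel `K_h(u) = |h|⁻ᵈ K(u / h)` of bandwidth `h` on a `d`-dimensional space `V`; the
kernel `K_{h,x}` of the paper is its translate `y ↦ K_h(y - x)`. -/
noncomputable def rescaledKernel {V : Type*} [AddCommGroup V] [Module ℝ V] (K : V → ℝ) (h : ℝ)
    (u : V) : ℝ :=
  (|h| ^ finrank ℝ V)⁻¹ * K (h⁻¹ • u)

theorem rescaledKernel_real_of_pos (K : ℝ → ℝ) {h : ℝ} (hh : 0 < h) (u : ℝ) :
    rescaledKernel K h u = K (u / h) / h := by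
  simp only [rescaledKernel, abs_of_pos hh, finrank_self, pow_one, smul_eq_mul, div_eq_inv_mul]

variable {V : Type*} [NormedAddCommGroup V] [NormedSpace ℝ V] [FiniteDimensional ℝ V]
  [MeasurableSpace V] [BorelSpace V] {ν : Measure V} [IsAddHaarMeasure ν] {K : V → ℝ} {h : ℝ}

theorem integrable_rescaledKernel (hK : Integrable K ν) (hh : h ≠ 0) :
    Integrable (rescaledKernel K h) ν :=
  (hK.comp_smul (inv_ne_zero hh)).const_mul _

theorem integral_norm_rescaledKernel (K : V → ℝ) (hh : h ≠ 0) :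
    ∫ u, ‖rescaledKernel K h u‖ ∂ν = ∫ u, ‖K u‖ ∂ν := by
  simp only [rescaledKernel, norm_mul, integral_const_mul,
    integral_comp_inv_smul ν (fun u => ‖K u‖)]
  simp [hh]

end RescaledKernel

theorem stmt_13_general {Ω V E : Type*} [MeasurableSpace Ω] (μ : Measure Ω)
    [NormedAddCommGroup V] [NormedSpace ℝ V] [FiniteDimensional ℝ V] [MeasurableSpace V]
    [BorelSpace V] (ν : Measure V) [IsAddHaarMeasure ν] [NormedAddCommGroup E] [NormedSpace ℝ E]
    {X : Ω → V} (hX : Measurable X) {ρ : V → ℝ≥0∞} (hdens : μ.map X = ν.withDensity ρ)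
    {C : ℝ≥0} (hρ : ∀ᵐ y ∂ν, ρ y ≤ C) {K : V → ℝ} (hK : Integrable K ν) {h : ℝ} (hh : h ≠ 0)
    {p : ℝ} (hp : 1 ≤ p) {f : Ω → E} (hf : AEStronglyMeasurable f μ)
    (hfp : Integrable (fun ω => ‖f ω‖ ^ p) μ) :
    ∫ x, ‖∫ ω, rescaledKernel K h (X ω - x) • f ω ∂μ‖ ^ p ∂ν
      ≤ C ^ (p - 1) * (∫ u, ‖K u‖ ∂ν) ^ p * ∫ ω, ‖f ω‖ ^ p ∂μ := by
  have hXν : μ.map X ≤ C • ν := hdens.trans_le (withDensity_le_smul_of_ae_le hρ)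
  simpa only [integral_norm_rescaledKernel K hh] using
    integral_norm_rpow_integral_comp_sub_smul_le hp hX hXν (integrable_rescaledKernel hK hh) hf hfp

/-- Lemma 2 (extended Jensen inequality): if the density of `X` is bounded by
`c/√t₀`, then `∫ₓ (E[K_{h,x}(X) φ(X,Y)])² dx ≤ (c/√t₀) E[φ(X,Y)²]`. -/
theorem stmt_13 {Ω : Type*} [MeasurableSpace Ω] (μ : Measure Ω) [IsProbabilityMeasure μ]
    (X Y : Ω → ℝ) (hX : Measurable X) (hY : Measurable Y)
    (c t₀ : ℝ) (hc : 0 < c) (ht₀ : 0 < t₀)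
    (ps : ℝ → ℝ) (hps_nonneg : ∀ y, 0 ≤ ps y)
    (hdens : Measure.map X μ = volume.withDensity fun y => ENNReal.ofReal (ps y))
    (hps_bdd : ∀ y, ps y ≤ c / Real.sqrt t₀)
    (K : ℝ → ℝ) (hK0 : ∀ z, 0 ≤ K z) (hKint : Integrable K)
    (hKmass : (∫ z : ℝ, K z) = 1) (h : ℝ) (hh : 0 < h)
    (φ : ℝ → ℝ → ℝ) (hφ : Measurable (Function.uncurry φ))
    (hφ2 : Integrable (fun ω => (φ (X ω) (Y ω)) ^ 2) μ) :
    (∫ x : ℝ, (∫ ω, (K ((X ω - x) / h) / h) * φ (X ω) (Y ω) ∂μ) ^ 2)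
      ≤ c / Real.sqrt t₀ * ∫ ω, (φ (X ω) (Y ω)) ^ 2 ∂μ := by
  have hC : 0 ≤ c / √t₀ := by positivity
  have hps (y : ℝ) : ENNReal.ofReal (ps y) ≤ (c / √t₀).toNNReal :=
    ENNReal.ofReal_le_ofReal (hps_bdd y)
  have hφXY : Measurable fun ω => φ (X ω) (Y ω) := hφ.comp (hX.prodMk hY)
  simpa [rescaledKernel_real_of_pos K hh, abs_of_nonneg (hK0 _), hKmass, hC,
    (by norm_num : (2 : ℝ) - 1 = 1)] using
    stmt_13_general μ volume hX hdens (ae_of_all _ hps) hKint hh.ne' one_le_two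
      hφXY.aestronglyMeasurable (by simpa using hφ2)
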